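/- Let Σ be a closed convex hypersurface in ℝ^d bounding a smooth convex body. Then the Minkowski deficit satisfies (1/|𝕊^{d−1}|)(∫_Σ H_{d−2} dS)² − ∫_Σ H_{d−3} dS ≤ ((d−1)/(d+1)) [ ∫_Σ (H_{d−2})²/H_{d−1} dS − (1/|𝕊^{d−1}|)(∫_Σ H_{d−2} dS)² ], where H_k is the normalized k-th mean curvature of Σ and |𝕊^{d−1}| is the area of the unit sphere in ℝ^d. -/

import Mathlib

open MeasureTheory Real
open scoped RealInnerProductSpace Pointwise

noncomputable section

/-- The surface (area) measure on the unit sphere `𝕊^{d-1} ⊂ ℝ^d`. -/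
def sphMeasure (d : ℕ) : Measure (Metric.sphere (0 : EuclideanSpace ℝ (Fin d)) 1) :=
  (volume : Measure (EuclideanSpace ℝ (Fin d))).toSphere

/-- The degree-zero homogeneous extension of a function on the unit sphere to `ℝ^d`
(extended by `0` at the origin). -/
def ext0 {d : ℕ} (F : Metric.sphere (0 : EuclideanSpace ℝ (Fin d)) 1 → ℝ)
    (x : EuclideanSpace ℝ (Fin d)) : ℝ :=
  letI := Classical.dec (x = 0)
  if hx : x = 0 then 0
  else F ⟨‖x‖⁻¹ • x, by
    simp [mem_sphere_zero_iff_norm, norm_smul, abs_of_nonneg, inv_mul_cancel₀,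
      norm_ne_zero_iff.mpr hx]⟩

/-- The Euclidean Laplacian of `f : ℝ^d → ℝ`. -/
def eucLap {d : ℕ} (f : EuclideanSpace ℝ (Fin d) → ℝ) (x : EuclideanSpace ℝ (Fin d)) : ℝ :=
  ∑ i, fderiv ℝ (fun y => fderiv ℝ f y (EuclideanSpace.single i 1)) x (EuclideanSpace.single i 1)

/-- The Laplace–Beltrami operator (spherical Laplacian) on the unit sphere `𝕊^{d-1}`:
for `F : 𝕊^{d-1} → ℝ`, `sphLap F` is the restriction to the sphere of the Euclidean
Laplacian of the degree-zero homogeneous extension of `F`.  (This is the standard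
characterization of the spherical Laplacian.) -/
def sphLap {d : ℕ} (F : Metric.sphere (0 : EuclideanSpace ℝ (Fin d)) 1 → ℝ) :
    Metric.sphere (0 : EuclideanSpace ℝ (Fin d)) 1 → ℝ :=
  fun θ => eucLap (ext0 F) θ.val

/-- A function on the unit sphere is smooth iff its degree-zero homogeneous extension is
smooth away from the origin. -/
def SphSmooth {d : ℕ} (F : Metric.sphere (0 : EuclideanSpace ℝ (Fin d)) 1 → ℝ) : Prop :=
  ContDiffOn ℝ (⊤ : ℕ∞) (ext0 F) {(0 : EuclideanSpace ℝ (Fin d))}ᶜ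

/-- The support function of a convex body `K ⊆ ℝ^d`, as a (1-homogeneous) function on `ℝ^d`:
`h_K(x) = sup_{y ∈ K} ⟨y, x⟩`. -/
def suppFn {d : ℕ} (K : ConvexBody (EuclideanSpace ℝ (Fin d)))
    (x : EuclideanSpace ℝ (Fin d)) : ℝ :=
  sSup ((fun y => ⟪y, x⟫) '' (K : Set (EuclideanSpace ℝ (Fin d))))

/-- The support function of `K`, restricted to the unit sphere. -/
def suppS {d : ℕ} (K : ConvexBody (EuclideanSpace ℝ (Fin d))) :
    Metric.sphere (0 : EuclideanSpace ℝ (Fin d)) 1 → ℝ :=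
  fun θ => suppFn K θ.val

/-- `K` is a smooth convex body: it has nonempty interior and its support function is
smooth away from the origin (equivalently, its boundary `Σ = ∂K` is a smooth closed
convex hypersurface). -/
def SmoothBody {d : ℕ} (K : ConvexBody (EuclideanSpace ℝ (Fin d))) : Prop :=
  (interior (K : Set (EuclideanSpace ℝ (Fin d)))).Nonempty ∧
    ContDiffOn ℝ (⊤ : ℕ∞) (suppFn K) {(0 : EuclideanSpace ℝ (Fin d))}ᶜ

/-- The area `|𝕊^{d-1}|` of the unit sphere in `ℝ^d`. -/
def sphArea (d : ℕ) : ℝ := (sphMeasure d Set.univ).toReal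

/-- The total (normalized) `(d-2)`-nd mean curvature `∫_Σ H_{d-2} dS` of `Σ = ∂K`,
expressed via the support function: `∫_Σ H_{d-2} dS = ∫_{𝕊^{d-1}} h dθ`. -/
def intH2 {d : ℕ} (K : ConvexBody (EuclideanSpace ℝ (Fin d))) : ℝ :=
  ∫ θ, suppS K θ ∂(sphMeasure d)

/-- The total (normalized) `(d-3)`-rd mean curvature `∫_Σ H_{d-3} dS` of `Σ = ∂K`,
expressed via the support function:
`∫_Σ H_{d-3} dS = (1/(d-1)) ∫_{𝕊^{d-1}} ((d-1) h² + h Δh) dθ`. -/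
def intH3 {d : ℕ} (K : ConvexBody (EuclideanSpace ℝ (Fin d))) : ℝ :=
  (1 / ((d : ℝ) - 1)) *
    ∫ θ, (((d : ℝ) - 1) * (suppS K θ) ^ 2 + suppS K θ * sphLap (suppS K) θ) ∂(sphMeasure d)

/-- The curvature integral `∫_Σ H_{d-2}²/H_{d-1} dS` of `Σ = ∂K`, expressed via the
support function: `H_{d-2}/H_{d-1} = h + Δh/(d-1)` and `dθ = H_{d-1} dS`, so
`∫_Σ H_{d-2}²/H_{d-1} dS = ∫_{𝕊^{d-1}} (h + Δh/(d-1))² dθ`. -/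
def intH2sq {d : ℕ} (K : ConvexBody (EuclideanSpace ℝ (Fin d))) : ℝ :=
  ∫ θ, (suppS K θ + sphLap (suppS K) θ / ((d : ℝ) - 1)) ^ 2 ∂(sphMeasure d)

/-- The Steiner point `z(K) = (1/|𝔹^d|) ∫_{𝕊^{d-1}} h_K(θ) θ dθ`. -/
def steinerPt {d : ℕ} (K : ConvexBody (EuclideanSpace ℝ (Fin d))) :
    EuclideanSpace ℝ (Fin d) :=
  ((volume (Metric.ball (0 : EuclideanSpace ℝ (Fin d)) 1)).toReal)⁻¹ •
    ∫ θ, suppS K θ • (θ : EuclideanSpace ℝ (Fin d)) ∂(sphMeasure d)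

/-- The mean width `w̄(K) = (2/|𝕊^{d-1}|) ∫_{𝕊^{d-1}} h_K dθ`. -/
def meanWidth {d : ℕ} (K : ConvexBody (EuclideanSpace ℝ (Fin d))) : ℝ :=
  (2 / sphArea d) * ∫ θ, suppS K θ ∂(sphMeasure d)

/-- The support function of the Steiner ball `B(K)` of `K` (the ball centered at the
Steiner point `z(K)` with diameter the mean width `w̄(K)`):
`h_{B(K)}(θ) = w̄(K)/2 + z(K)·θ`. -/
def steinerBallSupp {d : ℕ} (K : ConvexBody (EuclideanSpace ℝ (Fin d))) :
    Metric.sphere (0 : EuclideanSpace ℝ (Fin d)) 1 → ℝ :=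
  fun θ => meanWidth K / 2 + ⟪steinerPt K, θ.val⟫

/-- The squared `L²` distance `δ₂(K, B(K))²` between `K` and its Steiner ball. -/
def delta2SqSteiner {d : ℕ} (K : ConvexBody (EuclideanSpace ℝ (Fin d))) : ℝ :=
  ∫ θ, (suppS K θ - steinerBallSupp K θ) ^ 2 ∂(sphMeasure d)

/-- The squared `L²` distance `δ₂(K, L)² = ∫_{𝕊^{d-1}} (h_K - h_L)² dθ`. -/
def delta2Sq {d : ℕ} (K L : ConvexBody (EuclideanSpace ℝ (Fin d))) : ℝ :=
  ∫ θ, (suppS K θ - suppS L θ) ^ 2 ∂(sphMeasure d)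


theorem hilbert_aux {E M : Type*} [NormedAddCommGroup E] [InnerProductSpace ℝ E]
    [AddCommGroup M] [Module ℝ M] (ι : M →ₗ[ℝ] E) (T : M →ₗ[ℝ] M) (U : ℕ → Submodule ℝ M)
    (hU : Monotone U) [∀ N, ((U N).map ι).HasOrthogonalProjection]
    (hdense : Dense (⋃ N, ((U N).map ι : Set E)))
    (lam : ℕ → ℝ) (f g : E)
    (hT0 : ∀ p ∈ U 0, T p = 0)
    (hT : ∀ N, ∀ p ∈ U N, T p ∈ U N)
    (hT1 : ∀ N, ∀ p ∈ U (N + 1), T p + lam (N + 1) • p ∈ U N)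
    (hsym : ∀ p q, inner ℝ (ι (T p)) (ι q) = inner ℝ (ι p) (ι (T q)))
    (hfg : ∀ p, inner ℝ g (ι p) = inner ℝ f (ι (T p)))
    (a b : ℝ) (hab : ∀ N, 0 ≤ lam (N + 1) ^ 2 - a * lam (N + 1) + b) (one : M) (h1 : one ∈ U 0)
    (hb : 0 ≤ b) :
    b * (inner ℝ f (ι one)) ^ 2 ≤
      (inner ℝ g g + a * inner ℝ f g + b * inner ℝ f f) * inner ℝ (ι one) (ι one) := by
  set V : ℕ → Submodule ℝ E := fun N => (U N).map ι with hV
  have hVm : Monotone V := fun i j h => Submodule.map_mono (hU h)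
  set F : ℕ → E := fun N => (V N).starProjection f with hF
  set G : ℕ → E := fun N => (V N).starProjection g with hG
  have hFm : ∀ N, F N ∈ V N := fun N => Submodule.starProjection_apply_mem _ _
  have hGm : ∀ N, G N ∈ V N := fun N => Submodule.starProjection_apply_mem _ _
  have hFi : ∀ N, ∀ v ∈ V N, inner ℝ (F N) v = inner ℝ f v := by
    intro N v hv
    rw [Submodule.inner_starProjection_left_eq_right, Submodule.starProjection_eq_self_iff.2 hv]
  have hGi : ∀ N, ∀ v ∈ V N, inner ℝ (G N) v = inner ℝ g v := by
    intro N v hv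
    rw [Submodule.inner_starProjection_left_eq_right, Submodule.starProjection_eq_self_iff.2 hv]
  have hG0 : G 0 = 0 := by
    obtain ⟨p, hp, hpe⟩ := hGm 0
    have := hGi 0 (G 0) (hGm 0)
    rw [← inner_self_eq_zero (𝕜 := ℝ), this, ← hpe, hfg, hT0 p hp]; simp
  have step : ∀ N, G (N+1) - G N = - lam (N+1) • (F (N+1) - F N) := by
    intro N
    set u := F (N+1) - F N with hu
    set w := G (N+1) - G N with hw
    have hum : u ∈ V (N+1) := sub_mem (hFm _) (hVm (Nat.le_succ N) (hFm _))
    have hwm : w ∈ V (N+1) := sub_mem (hGm _) (hVm (Nat.le_succ N) (hGm _))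
    have huo : ∀ v ∈ V N, inner ℝ u v = 0 := by
      intro v hv
      rw [hu, inner_sub_left, hFi _ _ (hVm (Nat.le_succ N) hv), hFi _ _ hv, sub_self]
    have hwo : ∀ v ∈ V N, inner ℝ w v = 0 := by
      intro v hv
      rw [hw, inner_sub_left, hGi _ _ (hVm (Nat.le_succ N) hv), hGi _ _ hv, sub_self]
    have hzm : w + lam (N+1) • u ∈ V (N+1) := add_mem hwm (Submodule.smul_mem _ _ hum)
    have hzo : ∀ v ∈ V N, inner ℝ (w + lam (N+1) • u) v = 0 := by
      intro v hv
      rw [inner_add_left, inner_smul_left, huo v hv, hwo v hv]; simp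
    obtain ⟨q, hq, hqe⟩ := hzm
    -- `T q = -lam q` in `E`
    have hr : ι (T q + lam (N+1) • q) = 0 := by
      have hrm := hT1 N q hq
      obtain ⟨r, hr⟩ : ∃ r, r = T q + lam (N+1) • q := ⟨_, rfl⟩
      rw [← hr] at hrm ⊢
      rw [← inner_self_eq_zero (𝕜 := ℝ)]
      have e : ι r = ι (T q) + lam (N+1) • ι q := by rw [hr, map_add, map_smul]
      nth_rewrite 1 [e]
      rw [inner_add_left, inner_smul_left, hsym, hqe,
        hzo _ ⟨_, hT N _ hrm, rfl⟩, hzo _ ⟨_, hrm, rfl⟩]; simp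
    have hTq : ι (T q) = - lam (N+1) • ι q := by
      rw [map_add, map_smul] at hr
      rw [neg_smul]; exact eq_neg_of_add_eq_zero_left hr
    have hqV : ι q ∈ V (N+1) := ⟨q, hq, rfl⟩
    have key : inner ℝ (w + lam (N+1) • u) (ι q) = 0 := by
      have e1 : inner ℝ w (ι q) = inner ℝ g (ι q) := by
        rw [hw, inner_sub_left, hGi _ _ hqV, hqe, real_inner_comm _ (G N), hzo _ (hGm N), sub_zero]
      have e2 : inner ℝ u (ι q) = inner ℝ f (ι q) := by
        rw [hu, inner_sub_left, hFi _ _ hqV, hqe, real_inner_comm _ (F N), hzo _ (hFm N), sub_zero]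
      rw [inner_add_left, inner_smul_left, e1, e2, hfg, hTq, inner_smul_right]; simp
    rw [hqe, inner_self_eq_zero] at key
    rw [neg_smul]; exact eq_neg_of_add_eq_zero_left key
  have main : ∀ N, b * inner ℝ (F 0) (F 0) ≤
      inner ℝ (G N) (G N) + a * inner ℝ (F N) (G N) + b * inner ℝ (F N) (F N) := by
    intro N
    induction N with
    | zero => rw [hG0]; simp
    | succ N ih =>
      refine ih.trans ?_
      set u := F (N+1) - F N with hu
      have huo : ∀ v ∈ V N, inner ℝ u v = 0 := by
        intro v hv
        rw [hu, inner_sub_left, hFi _ _ (hVm (Nat.le_succ N) hv), hFi _ _ hv, sub_self]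
      have e1 : F (N+1) = F N + u := by rw [hu]; abel
      have e2 : G (N+1) = G N + (-lam (N+1)) • u := by rw [← step N]; abel
      rw [e1, e2]
      have h1 := huo _ (hFm N)
      have h2 := huo _ (hGm N)
      have h3 : inner ℝ (F N) u = 0 := by rw [real_inner_comm]; exact h1
      have h4 : inner ℝ (G N) u = 0 := by rw [real_inner_comm]; exact h2
      simp only [inner_add_left, inner_add_right, real_inner_smul_left, real_inner_smul_right,
        h1, h2, h3, h4]
      have := mul_nonneg (hab N) (real_inner_self_nonneg (x := u))
      nlinarith [this]
  have hd : ⊤ ≤ (⨆ N, V N).topologicalClosure := by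
    intro x _
    rw [← SetLike.mem_coe, Submodule.topologicalClosure_coe]
    exact closure_mono (Set.iUnion_subset fun N => (le_iSup V N : V N ≤ _)) (hdense x)
  have tF := Submodule.starProjection_tendsto_self V hVm f hd
  have tG := Submodule.starProjection_tendsto_self V hVm g hd
  have lim := ge_of_tendsto' (((tG.inner (𝕜 := ℝ) tG).add ((tF.inner (𝕜 := ℝ) tG).const_mul a)).add
    ((tF.inner (𝕜 := ℝ) tF).const_mul b)) main
  have cs := real_inner_mul_inner_self_le (F 0) (ι one)
  rw [hFi 0 _ ⟨one, h1, rfl⟩] at cs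
  have n1 := real_inner_self_nonneg (x := ι one)
  calc b * (inner ℝ f (ι one)) ^ 2 ≤ b * (inner ℝ (F 0) (F 0) * inner ℝ (ι one) (ι one)) := by
        apply mul_le_mul_of_nonneg_left _ hb; rw [sq]; exact cs
    _ ≤ _ := by rw [← mul_assoc]; exact mul_le_mul_of_nonneg_right lim n1


/-- positive homogeneity of degree `l` away from the origin. -/
def HomOn {d : ℕ} (l : ℤ) (F : EuclideanSpace ℝ (Fin d) → ℝ) : Prop :=
  ∀ x, x ≠ 0 → ∀ r : ℝ, 0 < r → F (r • x) = r ^ l * F x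

instance sphMeasure_finite (d : ℕ) : IsFiniteMeasure (sphMeasure d) := by
  unfold sphMeasure; infer_instance

theorem polar_prod {d : ℕ} (ψ : EuclideanSpace ℝ (Fin d) → ℝ)
    (hd : 2 ≤ d)
    (a : Metric.sphere (0 : EuclideanSpace ℝ (Fin d)) 1 → ℝ) (b : ℝ → ℝ)
    (h : ∀ (θ : Metric.sphere (0 : EuclideanSpace ℝ (Fin d)) 1) (r : ℝ), 0 < r →
      ψ (r • θ.val) = a θ * b r) :
    ∫ x, ψ x = (∫ θ, a θ ∂(sphMeasure d)) *
      ∫ r : Set.Ioi (0 : ℝ), b r ∂(Measure.volumeIoiPow (d - 1)) := by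
  have : Nontrivial (EuclideanSpace ℝ (Fin d)) := by
    have : Nonempty (Fin d) := ⟨⟨0, by omega⟩⟩
    infer_instance
  have mp := (volume : Measure (EuclideanSpace ℝ (Fin d))).measurePreserving_homeomorphUnitSphereProd
  rw [finrank_euclideanSpace_fin] at mp
  calc ∫ x, ψ x = ∫ x : ({(0)}ᶜ : Set (EuclideanSpace ℝ (Fin d))), ψ x.1 
        ∂((volume : Measure (EuclideanSpace ℝ (Fin d))).comap (Subtype.val)) := by
        rw [integral_subtype_comap (measurableSet_singleton _).compl fun x ↦ ψ x,
          restrict_compl_singleton]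
    _ = ∫ z, a z.1 * b z.2 ∂(sphMeasure d).prod (.volumeIoiPow (d - 1)) := by
        rw [sphMeasure, ← mp.integral_comp (Homeomorph.measurableEmbedding _)]
        apply integral_congr_ae
        refine Filter.Eventually.of_forall fun x => ?_
        have hx : ‖x.1‖ ≠ 0 := norm_ne_zero_iff.2 x.2
        have := h (homeomorphUnitSphereProd _ x).1 (homeomorphUnitSphereProd _ x).2
          (homeomorphUnitSphereProd _ x).2.2
        simp only [] at this ⊢
        rw [← this]
        simp [smul_smul, hx]
    _ = _ := integral_prod_mul a (fun r : Set.Ioi (0 : ℝ) => b r)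

theorem HomOn.dirDeriv {d : ℕ} {l : ℤ} {F : EuclideanSpace ℝ (Fin d) → ℝ} (hF : HomOn l F)
    (hs : ContDiffOn ℝ (⊤ : ℕ∞) F {(0 : EuclideanSpace ℝ (Fin d))}ᶜ)
    (v : EuclideanSpace ℝ (Fin d)) : HomOn (l - 1) (fun x => fderiv ℝ F x v) := by
  intro x hx r hr
  have hd : ∀ y, y ≠ 0 → DifferentiableAt ℝ F y := fun y hy =>
    (hs.contDiffAt (isOpen_compl_singleton.mem_nhds hy)).differentiableAt (by simp)
  have hrx : r • x ≠ 0 := smul_ne_zero hr.ne' hx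
  have h1 : HasFDerivAt (fun y => F (r • y)) ((fderiv ℝ F (r • x)).comp
      (r • ContinuousLinearMap.id ℝ (EuclideanSpace ℝ (Fin d)))) x :=
    (hd _ hrx).hasFDerivAt.comp x ((hasFDerivAt_id x).const_smul r)
  have h2 : HasFDerivAt (fun y => r ^ l * F y) (r ^ l • fderiv ℝ F x) x :=
    (hd x hx).hasFDerivAt.const_mul _
  have h3 : (fun y => F (r • y)) =ᶠ[nhds x] (fun y => r ^ l * F y) := by
    filter_upwards [isOpen_compl_singleton.mem_nhds hx] with y hy
    exact hF y hy r hr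
  have := h1.unique (h2.congr_of_eventuallyEq h3)
  have := congrArg (fun L => L v) this
  simp at this
  have hz : r ^ l = r ^ (l - 1) * r := by
    rw [← zpow_add_one₀ hr.ne', sub_add_cancel]
  rw [hz] at this
  have : r * ((fderiv ℝ F (r • x)) v) = r * (r ^ (l - 1) * (fderiv ℝ F x) v) := by
    rw [this]; ring
  exact mul_left_cancel₀ hr.ne' this

theorem HomOn.euler {d : ℕ} {l : ℤ} {F : EuclideanSpace ℝ (Fin d) → ℝ} (hF : HomOn l F)
    {x : EuclideanSpace ℝ (Fin d)} (hx : x ≠ 0) (hd : DifferentiableAt ℝ F x) :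
    fderiv ℝ F x x = l * F x := by
  have h1 : HasDerivAt (fun r : ℝ => F (r • x)) (fderiv ℝ F x x) 1 := by
    have h0 : HasDerivAt (fun r : ℝ => r • x) x 1 := by
      simpa using (hasDerivAt_id (1:ℝ)).smul_const x
    have : HasFDerivAt F (fderiv ℝ F x) ((1:ℝ) • x) := by simpa using hd.hasFDerivAt
    exact this.comp_hasDerivAt (1:ℝ) h0
  have h2 : HasDerivAt (fun r : ℝ => r ^ l * F x) (l * F x) 1 := by
    simpa using (hasDerivAt_zpow l (1:ℝ) (Or.inl one_ne_zero)).mul_const (F x)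
  have h3 : (fun r : ℝ => F (r • x)) =ᶠ[nhds 1] (fun r : ℝ => r ^ l * F x) := by
    filter_upwards [lt_mem_nhds (zero_lt_one' ℝ)] with r hr
    exact hF x hx r hr
  exact h1.unique (h2.congr_of_eventuallyEq h3)

theorem eucl_sum {d : ℕ} (x : EuclideanSpace ℝ (Fin d)) :
    ∑ i, x i • EuclideanSpace.single i (1:ℝ) = x := by
  ext j
  simp [Finset.sum_apply, Pi.single_apply]

theorem HomOn.euler_sum {d : ℕ} {l : ℤ} {F : EuclideanSpace ℝ (Fin d) → ℝ} (hF : HomOn l F)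
    {x : EuclideanSpace ℝ (Fin d)} (hx : x ≠ 0) (hd : DifferentiableAt ℝ F x) :
    ∑ i, x i * fderiv ℝ F x (EuclideanSpace.single i 1) = l * F x := by
  rw [← hF.euler hx hd]
  conv_rhs => arg 2; rw [← eucl_sum x]
  simp [map_sum]

theorem smooth_dir {d : ℕ} {F : EuclideanSpace ℝ (Fin d) → ℝ}
    (hs : ContDiffOn ℝ (⊤ : ℕ∞) F {(0 : EuclideanSpace ℝ (Fin d))}ᶜ)
    (v : EuclideanSpace ℝ (Fin d)) :
    ContDiffOn ℝ (⊤ : ℕ∞) (fun x => fderiv ℝ F x v) {(0 : EuclideanSpace ℝ (Fin d))}ᶜ :=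
  (hs.fderiv_of_isOpen isOpen_compl_singleton (m := (⊤ : ℕ∞)) (by simp)).clm_apply
    contDiffOn_const

theorem eucLap_hom {d : ℕ} {l : ℤ} {F : EuclideanSpace ℝ (Fin d) → ℝ} (hF : HomOn l F)
    (hs : ContDiffOn ℝ (⊤ : ℕ∞) F {(0 : EuclideanSpace ℝ (Fin d))}ᶜ) :
    HomOn (l - 2) (eucLap F) := by
  intro x hx r hr
  unfold eucLap
  rw [Finset.mul_sum]
  refine Finset.sum_congr rfl fun i _ => ?_
  have := (hF.dirDeriv hs (EuclideanSpace.single i 1)).dirDeriv (smooth_dir hs _)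
    (EuclideanSpace.single i 1) x hx r hr
  rw [show l - 2 = l - 1 - 1 by ring]
  exact this

theorem eucLap_smooth {d : ℕ} {F : EuclideanSpace ℝ (Fin d) → ℝ}
    (hs : ContDiffOn ℝ (⊤ : ℕ∞) F {(0 : EuclideanSpace ℝ (Fin d))}ᶜ) :
    ContDiffOn ℝ (⊤ : ℕ∞) (eucLap F) {(0 : EuclideanSpace ℝ (Fin d))}ᶜ := by
  unfold eucLap
  exact ContDiffOn.sum fun i _ => smooth_dir (smooth_dir hs _) _

/-- radial cutoff -/
def rho {d : ℕ} (x : EuclideanSpace ℝ (Fin d)) : ℝ :=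
  (⟨1/4, 1/2, by norm_num, by norm_num⟩ : ContDiffBump (1:ℝ)) (‖x‖ ^ 2)

theorem rho_smooth {d : ℕ} : ContDiff ℝ (⊤ : ℕ∞) (rho (d := d)) :=
  (ContDiffBump.contDiff _).comp (contDiff_norm_sq ℝ)

theorem rho_zero_of {d : ℕ} {x : EuclideanSpace ℝ (Fin d)} (h : 1/2 ≤ |‖x‖^2 - 1|) : rho x = 0 :=
  ContDiffBump.zero_of_le_dist _ (by rw [Real.dist_eq]; exact h)

theorem rho_one {d : ℕ} {x : EuclideanSpace ℝ (Fin d)} (h : ‖x‖ = 1) : rho x = 1 :=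
  ContDiffBump.one_of_mem_closedBall _ (by simp [h])

theorem rho_near_zero {d : ℕ} : ∀ᶠ x in nhds (0 : EuclideanSpace ℝ (Fin d)), rho x = 0 := by
  filter_upwards [Metric.ball_mem_nhds (0 : EuclideanSpace ℝ (Fin d)) (show (0:ℝ) < 1/2 by norm_num)]
    with x hx
  apply rho_zero_of
  rw [mem_ball_zero_iff] at hx
  have := norm_nonneg x
  rw [abs_of_nonpos] <;> nlinarith

theorem rho_compact {d : ℕ} (u : EuclideanSpace ℝ (Fin d) → ℝ) :
    HasCompactSupport (fun x => rho x * u x) := by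
  refine HasCompactSupport.intro (isCompact_closedBall (0 : EuclideanSpace ℝ (Fin d)) 2) ?_
  intro x hx
  rw [mem_closedBall_zero_iff, not_le] at hx
  rw [rho_zero_of, zero_mul]
  rw [abs_of_nonneg] <;> nlinarith

theorem rho_mul_smooth {d : ℕ} {u : EuclideanSpace ℝ (Fin d) → ℝ}
    (hs : ContDiffOn ℝ (⊤ : ℕ∞) u {(0 : EuclideanSpace ℝ (Fin d))}ᶜ) :
    ContDiff ℝ (⊤ : ℕ∞) (fun x => rho x * u x) := by
  rw [contDiff_iff_contDiffAt]
  intro x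
  by_cases hx : x = 0
  · subst hx
    refine (contDiffAt_const (c := (0:ℝ))).congr_of_eventuallyEq ?_
    filter_upwards [rho_near_zero] with y hy
    rw [hy, zero_mul]
  · exact rho_smooth.contDiffAt.mul (hs.contDiffAt (isOpen_compl_singleton.mem_nhds hx))

theorem integral_dir_zero {d : ℕ} {w : EuclideanSpace ℝ (Fin d) → ℝ}
    (hw : ContDiff ℝ (⊤ : ℕ∞) w) (hc : HasCompactSupport w) (v : EuclideanSpace ℝ (Fin d)) :
    ∫ x, fderiv ℝ w x v = 0 := by
  have hcd : Continuous (fun x => fderiv ℝ w x v) :=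
    (hw.continuous_fderiv (by simp)).clm_apply continuous_const
  have hi : Integrable (fun x => fderiv ℝ w x v) :=
    hcd.integrable_of_hasCompactSupport (hc.fderiv_apply ℝ v)
  have := integral_mul_fderiv_eq_neg_fderiv_mul_of_integrable (μ := volume)
    (f := fun _ : EuclideanSpace ℝ (Fin d) => (1:ℝ)) (g := w) (v := v)
    (by simp) (by simpa using hi)
    (by simpa using hw.continuous.integrable_of_hasCompactSupport hc)
    (fun x _ => differentiableAt_const _) (fun x _ => hw.differentiable (by simp) x)
  simpa using this


/-- the vector field used in Green's identity -/
def fieldU {d : ℕ} (c : ℝ) (F G : EuclideanSpace ℝ (Fin d) → ℝ) (i : Fin d)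
    (x : EuclideanSpace ℝ (Fin d)) : ℝ :=
  G x * fderiv ℝ F x (EuclideanSpace.single i 1) - F x * fderiv ℝ G x (EuclideanSpace.single i 1)
    + c * (F x * G x * (x i * (‖x‖ ^ 2)⁻¹))

theorem fieldU_smooth {d : ℕ} (c : ℝ) {F G : EuclideanSpace ℝ (Fin d) → ℝ} (i : Fin d)
    (hF : ContDiffOn ℝ (⊤ : ℕ∞) F {(0 : EuclideanSpace ℝ (Fin d))}ᶜ)
    (hG : ContDiffOn ℝ (⊤ : ℕ∞) G {(0 : EuclideanSpace ℝ (Fin d))}ᶜ) :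
    ContDiffOn ℝ (⊤ : ℕ∞) (fieldU c F G i) {(0 : EuclideanSpace ℝ (Fin d))}ᶜ := by
  unfold fieldU
  have h1 : ContDiffOn ℝ (⊤ : ℕ∞) (fun x : EuclideanSpace ℝ (Fin d) => (‖x‖ ^ 2)⁻¹)
      {(0 : EuclideanSpace ℝ (Fin d))}ᶜ := by
    refine ContDiffOn.inv (contDiff_norm_sq ℝ).contDiffOn ?_
    intro x hx
    exact pow_ne_zero 2 (norm_ne_zero_iff.2 hx)
  have h2 : ContDiffOn ℝ (⊤ : ℕ∞) (fun x : EuclideanSpace ℝ (Fin d) => x i)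
      {(0 : EuclideanSpace ℝ (Fin d))}ᶜ :=
    (EuclideanSpace.proj (𝕜 := ℝ) i).contDiff.contDiffOn
  exact ((hG.mul (smooth_dir hF _)).sub (hF.mul (smooth_dir hG _))).add
    (contDiffOn_const.mul ((hF.mul hG).mul (h2.mul h1)))

theorem fieldU_deriv {d : ℕ} (c : ℝ) {F G : EuclideanSpace ℝ (Fin d) → ℝ} (i : Fin d)
    (hF : ContDiffOn ℝ (⊤ : ℕ∞) F {(0 : EuclideanSpace ℝ (Fin d))}ᶜ)
    (hG : ContDiffOn ℝ (⊤ : ℕ∞) G {(0 : EuclideanSpace ℝ (Fin d))}ᶜ)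
    {x : EuclideanSpace ℝ (Fin d)} (hx : x ≠ 0) :
    fderiv ℝ (fieldU c F G i) x (EuclideanSpace.single i 1) =
      G x * fderiv ℝ (fun y => fderiv ℝ F y (EuclideanSpace.single i 1)) x
        (EuclideanSpace.single i 1)
      - F x * fderiv ℝ (fun y => fderiv ℝ G y (EuclideanSpace.single i 1)) x
        (EuclideanSpace.single i 1)
      + c * ((G x * (x i * fderiv ℝ F x (EuclideanSpace.single i 1)) +
          F x * (x i * fderiv ℝ G x (EuclideanSpace.single i 1))) * (‖x‖ ^ 2)⁻¹
        + F x * G x * ((‖x‖ ^ 2)⁻¹ - 2 * (x i) ^ 2 * ((‖x‖ ^ 2)⁻¹) ^ 2)) := by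
  have dd : ∀ {H : EuclideanSpace ℝ (Fin d) → ℝ},
      ContDiffOn ℝ (⊤ : ℕ∞) H {(0 : EuclideanSpace ℝ (Fin d))}ᶜ → HasFDerivAt H (fderiv ℝ H x) x :=
    fun h => ((h.contDiffAt (isOpen_compl_singleton.mem_nhds hx)).differentiableAt
      (by simp)).hasFDerivAt
  have h1 := dd hF
  have h2 := dd hG
  have h3 := dd (smooth_dir hF (EuclideanSpace.single i 1))
  have h4 := dd (smooth_dir hG (EuclideanSpace.single i 1))
  have h5 : HasFDerivAt (fun y : EuclideanSpace ℝ (Fin d) => y i)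
      (EuclideanSpace.proj (𝕜 := ℝ) i) x := (EuclideanSpace.proj (𝕜 := ℝ) i).hasFDerivAt
  have hn : ‖x‖ ^ 2 ≠ 0 := pow_ne_zero 2 (norm_ne_zero_iff.2 hx)
  have h6 := (hasDerivAt_inv hn).comp_hasFDerivAt x (hasStrictFDerivAt_norm_sq x).hasFDerivAt
  have := ((h2.mul h3).sub (h1.mul h4)).add (((h1.mul h2).mul (h5.mul h6)).const_mul c)
  have e := this.fderiv
  change fderiv ℝ (fieldU c F G i) x = _ at e
  rw [e]
  simp [EuclideanSpace.inner_single_right]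
  field_simp
  ring

theorem eucl_norm_sq {d : ℕ} (x : EuclideanSpace ℝ (Fin d)) : ∑ i, (x i) ^ 2 = ‖x‖ ^ 2 := by
  rw [EuclideanSpace.real_norm_sq_eq]

theorem fieldU_div {d : ℕ} {l k : ℤ} {F G : EuclideanSpace ℝ (Fin d) → ℝ}
    (hF : ContDiffOn ℝ (⊤ : ℕ∞) F {(0 : EuclideanSpace ℝ (Fin d))}ᶜ)
    (hG : ContDiffOn ℝ (⊤ : ℕ∞) G {(0 : EuclideanSpace ℝ (Fin d))}ᶜ)
    (hlF : HomOn l F) (hkG : HomOn k G)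
    {x : EuclideanSpace ℝ (Fin d)} (hx : x ≠ 0) :
    ∑ i, fderiv ℝ (fieldU (k - l) F G i) x (EuclideanSpace.single i 1) =
      G x * eucLap F x - F x * eucLap G x +
        ((k:ℝ) - l) * (k + l + d - 2) * (F x * G x * (‖x‖ ^ 2)⁻¹) := by
  have dF : DifferentiableAt ℝ F x :=
    (hF.contDiffAt (isOpen_compl_singleton.mem_nhds hx)).differentiableAt (by simp)
  have dG : DifferentiableAt ℝ G x :=
    (hG.contDiffAt (isOpen_compl_singleton.mem_nhds hx)).differentiableAt (by simp)
  have hn : ‖x‖ ^ 2 ≠ 0 := pow_ne_zero 2 (norm_ne_zero_iff.2 hx)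
  rw [Finset.sum_congr rfl fun i _ => fieldU_deriv ((k:ℝ) - l) i hF hG hx]
  simp only [Finset.sum_add_distrib, Finset.sum_sub_distrib, ← Finset.mul_sum, ← Finset.sum_mul]
  rw [hlF.euler_sum hx dF, hkG.euler_sum hx dG, eucl_norm_sq]
  unfold eucLap
  simp
  field_simp
  ring

theorem fieldU_radial {d : ℕ} {l k : ℤ} {F G : EuclideanSpace ℝ (Fin d) → ℝ}
    (hF : ContDiffOn ℝ (⊤ : ℕ∞) F {(0 : EuclideanSpace ℝ (Fin d))}ᶜ)
    (hG : ContDiffOn ℝ (⊤ : ℕ∞) G {(0 : EuclideanSpace ℝ (Fin d))}ᶜ)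
    (hlF : HomOn l F) (hkG : HomOn k G)
    {x : EuclideanSpace ℝ (Fin d)} (hx : x ≠ 0) :
    ∑ i, x i * fieldU (k - l) F G i x = 0 := by
  have dF : DifferentiableAt ℝ F x :=
    (hF.contDiffAt (isOpen_compl_singleton.mem_nhds hx)).differentiableAt (by simp)
  have dG : DifferentiableAt ℝ G x :=
    (hG.contDiffAt (isOpen_compl_singleton.mem_nhds hx)).differentiableAt (by simp)
  have hn : ‖x‖ ^ 2 ≠ 0 := pow_ne_zero 2 (norm_ne_zero_iff.2 hx)
  have : ∀ i, x i * fieldU (k - l) F G i x =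
      G x * (x i * fderiv ℝ F x (EuclideanSpace.single i 1))
      - F x * (x i * fderiv ℝ G x (EuclideanSpace.single i 1))
      + ((k:ℝ) - l) * F x * G x * (‖x‖^2)⁻¹ * (x i)^2 := by
    intro i; unfold fieldU; ring
  rw [Finset.sum_congr rfl fun i _ => this i]
  simp only [Finset.sum_add_distrib, Finset.sum_sub_distrib, ← Finset.mul_sum]
  rw [hlF.euler_sum hx dF, hkG.euler_sum hx dG, eucl_norm_sq]
  field_simp
  ring

theorem rho_deriv {d : ℕ} (x : EuclideanSpace ℝ (Fin d)) :
    ∃ c : ℝ, ∀ i, fderiv ℝ (rho (d := d)) x (EuclideanSpace.single i 1) = c * x i := by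
  set φ : ContDiffBump (1:ℝ) := ⟨1/4, 1/2, by norm_num, by norm_num⟩ with hφ
  have h1 : HasDerivAt φ (deriv φ (‖x‖^2)) (‖x‖^2) :=
    ((φ.contDiff (n := 1)).differentiable (by simp) _).hasDerivAt
  have := h1.comp_hasFDerivAt x (hasStrictFDerivAt_norm_sq x).hasFDerivAt
  refine ⟨2 * deriv φ (‖x‖^2), fun i => ?_⟩
  have e := this.fderiv
  change fderiv ℝ (rho (d := d)) x = _ at e
  rw [e]
  simp [EuclideanSpace.inner_single_right]
  ring

/-- the Green integrand -/
def greenB {d : ℕ} (l k : ℤ) (F G : EuclideanSpace ℝ (Fin d) → ℝ)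
    (x : EuclideanSpace ℝ (Fin d)) : ℝ :=
  G x * eucLap F x - F x * eucLap G x +
        ((k:ℝ) - l) * (k + l + d - 2) * (F x * G x * (‖x‖ ^ 2)⁻¹)

theorem green_space {d : ℕ} {l k : ℤ} {F G : EuclideanSpace ℝ (Fin d) → ℝ}
    (hF : ContDiffOn ℝ (⊤ : ℕ∞) F {(0 : EuclideanSpace ℝ (Fin d))}ᶜ)
    (hG : ContDiffOn ℝ (⊤ : ℕ∞) G {(0 : EuclideanSpace ℝ (Fin d))}ᶜ)
    (hlF : HomOn l F) (hkG : HomOn k G) :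
    ∫ x : EuclideanSpace ℝ (Fin d), rho x * greenB l k F G x = 0 := by
  have hs : ∀ i, ContDiff ℝ (⊤ : ℕ∞) (fun x => rho x * fieldU (k - l) F G i x) :=
    fun i => rho_mul_smooth (fieldU_smooth _ i hF hG)
  have hpt : ∀ x : EuclideanSpace ℝ (Fin d), rho x * greenB l k F G x =
      ∑ i, fderiv ℝ (fun x => rho x * fieldU (k - l) F G i x) x (EuclideanSpace.single i 1) := by
    intro x
    by_cases hx : x = 0
    · subst hx
      have h0 : ∀ i, fderiv ℝ (fun x => rho x * fieldU (k - l) F G i x)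
          (0 : EuclideanSpace ℝ (Fin d)) = 0 := by
        intro i
        have : (fun x : EuclideanSpace ℝ (Fin d) => rho x * fieldU (k - l) F G i x)
            =ᶠ[nhds 0] fun _ => 0 := by
          filter_upwards [rho_near_zero] with y hy
          rw [hy, zero_mul]
        rw [this.fderiv_eq]; simp
      simp [h0, rho_near_zero.self_of_nhds]
    · obtain ⟨c, hc⟩ := rho_deriv x
      have : ∀ i, fderiv ℝ (fun x => rho x * fieldU (k - l) F G i x) x (EuclideanSpace.single i 1)
          = rho x * fderiv ℝ (fieldU (k - l) F G i) x (EuclideanSpace.single i 1)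
            + c * (x i * fieldU (k - l) F G i x) := by
        intro i
        have d1 : DifferentiableAt ℝ (rho (d := d)) x := rho_smooth.differentiable (by simp) x
        have d2 : DifferentiableAt ℝ (fieldU (k - l) F G i) x :=
          ((fieldU_smooth _ i hF hG).contDiffAt
            (isOpen_compl_singleton.mem_nhds hx)).differentiableAt (by simp)
        rw [fderiv_fun_mul d1 d2]
        simp [hc]
        ring
      rw [Finset.sum_congr rfl fun i _ => this i]
      simp only [Finset.sum_add_distrib, ← Finset.mul_sum]
      rw [fieldU_radial hF hG hlF hkG hx, fieldU_div hF hG hlF hkG hx]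
      simp [greenB]
  rw [integral_congr_ae (Filter.Eventually.of_forall hpt), integral_finsetSum]
  · exact Finset.sum_eq_zero fun i _ => integral_dir_zero (hs i) (rho_compact _) _
  · intro i _
    exact (((hs i).continuous_fderiv (by simp)).clm_apply continuous_const
      ).integrable_of_hasCompactSupport ((rho_compact _).fderiv_apply ℝ _)

theorem greenB_hom {d : ℕ} {l k : ℤ} {F G : EuclideanSpace ℝ (Fin d) → ℝ}
    (hF : ContDiffOn ℝ (⊤ : ℕ∞) F {(0 : EuclideanSpace ℝ (Fin d))}ᶜ)
    (hG : ContDiffOn ℝ (⊤ : ℕ∞) G {(0 : EuclideanSpace ℝ (Fin d))}ᶜ)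
    (hlF : HomOn l F) (hkG : HomOn k G) : HomOn (k + l - 2) (greenB l k F G) := by
  intro x hx r hr
  unfold greenB
  rw [eucLap_hom hlF hF x hx r hr, eucLap_hom hkG hG x hx r hr, hlF x hx r hr, hkG x hx r hr,
    norm_smul, Real.norm_of_nonneg hr.le]
  have hr' := hr.ne'
  have e1 : r ^ (k + l - 2) = r ^ k * r ^ l * (r^2)⁻¹ := by
    rw [zpow_sub₀ hr', zpow_add₀ hr']; norm_cast
  have e2 : r ^ (l - 2) = r ^ l * (r^2)⁻¹ := by
    rw [zpow_sub₀ hr']; norm_cast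
  have e3 : r ^ (k - 2) = r ^ k * (r^2)⁻¹ := by
    rw [zpow_sub₀ hr']; norm_cast
  rw [e1, e2, e3, mul_pow, mul_inv]
  ring

theorem rho_nonneg {d : ℕ} (x : EuclideanSpace ℝ (Fin d)) : 0 ≤ rho x := ContDiffBump.nonneg _

/-- **Green's identity on the sphere** -/
theorem green_sphere {d : ℕ} (hd : 2 ≤ d) {l k : ℤ} {F G : EuclideanSpace ℝ (Fin d) → ℝ}
    (hF : ContDiffOn ℝ (⊤ : ℕ∞) F {(0 : EuclideanSpace ℝ (Fin d))}ᶜ)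
    (hG : ContDiffOn ℝ (⊤ : ℕ∞) G {(0 : EuclideanSpace ℝ (Fin d))}ᶜ)
    (hlF : HomOn l F) (hkG : HomOn k G) :
    ∫ θ : Metric.sphere (0 : EuclideanSpace ℝ (Fin d)) 1, greenB l k F G θ.val ∂(sphMeasure d)
      = 0 := by
  set i0 : Fin d := ⟨0, by omega⟩
  set e0 : EuclideanSpace ℝ (Fin d) := EuclideanSpace.single i0 1 with he0
  have hn0 : ‖e0‖ = 1 := by simp [he0]
  have hne : ∀ θ : Metric.sphere (0 : EuclideanSpace ℝ (Fin d)) 1, θ.val ≠ 0 := fun θ =>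
    norm_ne_zero_iff.1 (by rw [mem_sphere_zero_iff_norm.1 θ.2]; exact one_ne_zero)
  have hrho : ∀ (θ : Metric.sphere (0 : EuclideanSpace ℝ (Fin d)) 1) (r : ℝ), 0 < r →
      rho (r • θ.val) = rho (r • e0) := by
    intro θ r hr
    unfold rho
    rw [norm_smul, norm_smul, hn0, mem_sphere_zero_iff_norm.1 θ.2]
  have p1 := polar_prod (fun x => rho x * greenB l k F G x) hd (fun θ => greenB l k F G θ.val)
    (fun r => rho (r • e0) * r ^ (k + l - 2)) (by
      intro θ r hr
      rw [hrho θ r hr, greenB_hom hF hG hlF hkG _ (hne θ) r hr]; ring)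
  have p2 := polar_prod (fun x => rho x * ‖x‖ ^ (k + l - 2)) hd (fun θ => 1)
    (fun r => rho (r • e0) * r ^ (k + l - 2)) (by
      intro θ r hr
      rw [hrho θ r hr, norm_smul, mem_sphere_zero_iff_norm.1 θ.2, Real.norm_of_nonneg hr.le]
      ring_nf)
  have sm : ContDiffOn ℝ (⊤ : ℕ∞) (fun x : EuclideanSpace ℝ (Fin d) => ‖x‖ ^ (k + l - 2))
      {(0 : EuclideanSpace ℝ (Fin d))}ᶜ := by
    intro x hx
    have h1 : ContDiffAt ℝ (⊤ : ℕ∞) (fun x : EuclideanSpace ℝ (Fin d) => ‖x‖) x :=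
      contDiffAt_norm ℝ hx
    have h2 : ContDiffAt ℝ (⊤ : ℕ∞) (fun x : EuclideanSpace ℝ (Fin d) => ‖x‖ ^ (k + l - 2)) x := by
      rcases (k + l - 2) with n | n
      · simpa using h1.pow n
      · simp only [zpow_negSucc]
        exact (h1.pow (n+1)).inv (pow_ne_zero _ (norm_ne_zero_iff.2 hx))
    exact h2.contDiffWithinAt
  have pos : 0 < ∫ x : EuclideanSpace ℝ (Fin d), rho x * ‖x‖ ^ (k + l - 2) := by
    refine Continuous.integral_pos_of_hasCompactSupport_nonneg_nonzero (x := e0)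
      (rho_mul_smooth sm).continuous (rho_compact _) ?_ ?_
    · intro x
      exact mul_nonneg (rho_nonneg x) (zpow_nonneg (norm_nonneg x) _)
    · rw [rho_one hn0, hn0]; simp
  rw [p2] at pos
  rw [green_space hF hG hlF hkG] at p1
  rcases mul_eq_zero.1 p1.symm with h | h
  · exact h
  · rw [h, mul_zero] at pos; exact absurd pos (lt_irrefl _)


/-- evaluation of a polynomial at a point of Euclidean space -/
def evP {d : ℕ} (p : MvPolynomial (Fin d) ℝ) (x : EuclideanSpace ℝ (Fin d)) : ℝ :=
  MvPolynomial.eval (fun i => x i) p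

theorem evP_smooth {d : ℕ} (p : MvPolynomial (Fin d) ℝ) : ContDiff ℝ (⊤ : ℕ∞) (evP p) := by
  induction p using MvPolynomial.induction_on with
  | C a =>
    have : evP (MvPolynomial.C a) = fun _ : EuclideanSpace ℝ (Fin d) => a := by
      ext; simp [evP]
    rw [this]; exact contDiff_const
  | add p q hp hq =>
    have : evP (p + q) = fun x : EuclideanSpace ℝ (Fin d) => evP p x + evP q x := by
      ext; simp [evP]
    rw [this]; exact hp.add hq
  | mul_X p i hp =>
    have h2 : ContDiff ℝ (⊤ : ℕ∞) (fun x : EuclideanSpace ℝ (Fin d) => x i) :=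
      (EuclideanSpace.proj (𝕜 := ℝ) i).contDiff
    have : evP (p * MvPolynomial.X i) = fun x : EuclideanSpace ℝ (Fin d) => evP p x * x i := by
      ext; simp [evP]
    rw [this]; exact hp.mul h2

theorem evP_fderiv {d : ℕ} (p : MvPolynomial (Fin d) ℝ) (i : Fin d)
    (x : EuclideanSpace ℝ (Fin d)) :
    fderiv ℝ (evP p) x (EuclideanSpace.single i 1) = evP (MvPolynomial.pderiv i p) x := by
  have hdiff : ∀ p : MvPolynomial (Fin d) ℝ, DifferentiableAt ℝ (evP p) x := fun p =>
    (evP_smooth p).differentiable (by simp) x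
  induction p using MvPolynomial.induction_on with
  | C a =>
    have : evP (MvPolynomial.C a) = fun _ : EuclideanSpace ℝ (Fin d) => a := by
      ext; simp [evP]
    rw [this]; simp [evP]
  | add p q hp hq =>
    have : evP (p + q) = fun x : EuclideanSpace ℝ (Fin d) => evP p x + evP q x := by
      ext; simp [evP]
    rw [this, fderiv_fun_add (hdiff p) (hdiff q)]
    simp [hp, hq]
    simp [evP]
  | mul_X p j hp =>
    have : evP (p * MvPolynomial.X j) = fun x : EuclideanSpace ℝ (Fin d) => evP p x * x j := by
      ext; simp [evP]
    have h5 : HasFDerivAt (fun y : EuclideanSpace ℝ (Fin d) => y j)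
      (EuclideanSpace.proj (𝕜 := ℝ) j) x := (EuclideanSpace.proj (𝕜 := ℝ) j).hasFDerivAt
    rw [this, ((hdiff p).hasFDerivAt.fun_mul h5).fderiv]
    simp [hp]
    simp [evP, MvPolynomial.pderiv_X, Pi.single_apply]
    by_cases hij : j = i
    · simp [hij]
    · simp [hij, Ne.symm hij]

theorem evP_hom {d : ℕ} {k : ℕ} {p : MvPolynomial (Fin d) ℝ} (hp : p.IsHomogeneous k) :
    HomOn (k : ℤ) (evP p) := by
  intro x _ r _
  unfold evP
  rw [MvPolynomial.eval_eq', MvPolynomial.eval_eq', Finset.mul_sum]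
  refine Finset.sum_congr rfl fun m hm => ?_
  have := hp.degree_eq_sum_deg_support hm
  have e : ∑ i, m i = k := by
    rw [this]
    exact (Finset.sum_subset (Finset.subset_univ _) (fun i _ hi => by simpa using hi)).symm
  simp only [PiLp.smul_apply, smul_eq_mul, mul_pow, Finset.prod_mul_distrib,
    Finset.prod_pow_eq_pow_sum, e, zpow_natCast]
  ring

/-- polynomial Laplacian -/
def lapP {d : ℕ} : MvPolynomial (Fin d) ℝ →ₗ[ℝ] MvPolynomial (Fin d) ℝ :=
  ∑ i, (MvPolynomial.pderiv i).toLinearMap ∘ₗ (MvPolynomial.pderiv i).toLinearMap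

/-- Euler operator -/
def euP {d : ℕ} : MvPolynomial (Fin d) ℝ →ₗ[ℝ] MvPolynomial (Fin d) ℝ :=
  ∑ i, (LinearMap.mulLeft ℝ (MvPolynomial.X i)) ∘ₗ (MvPolynomial.pderiv i).toLinearMap

/-- spherical Laplacian on polynomials -/
def sphP {d : ℕ} : MvPolynomial (Fin d) ℝ →ₗ[ℝ] MvPolynomial (Fin d) ℝ :=
  lapP - euP ∘ₗ euP - ((d : ℝ) - 2) • euP

/-- eigenvalues -/
def lamS (d : ℕ) (k : ℕ) : ℝ := (k : ℝ) * (k + d - 2)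

theorem sphP_hom {d : ℕ} {k : ℕ} {p : MvPolynomial (Fin d) ℝ} (hp : p.IsHomogeneous k) :
    sphP p = lapP p - lamS d k • p := by
  have h : euP p = (k : ℝ) • p := by
    have := hp.sum_X_mul_pderiv
    rw [← Nat.cast_smul_eq_nsmul ℝ] at this
    rw [← this]
    simp [euP]
  have e : sphP p = lapP p - euP (euP p) - ((d : ℝ) - 2) • euP p := rfl
  rw [e, h, map_smul, h, smul_smul, smul_smul, sub_sub, ← add_smul, lamS]
  congr 2
  ring

theorem eucLap_evP {d : ℕ} (p : MvPolynomial (Fin d) ℝ) (x : EuclideanSpace ℝ (Fin d)) :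
    eucLap (evP p) x = evP (lapP p) x := by
  unfold eucLap
  have : ∀ i, (fun y => fderiv ℝ (evP p) y (EuclideanSpace.single i 1)) =
      evP (MvPolynomial.pderiv i p) := fun i => funext fun y => evP_fderiv p i y
  simp only [this, evP_fderiv]
  simp [evP, lapP]

theorem lapP_deg {d : ℕ} {k : ℕ} {p : MvPolynomial (Fin d) ℝ} (hp : p.IsHomogeneous k) :
    lapP p ∈ MvPolynomial.restrictTotalDegree (Fin d) ℝ (k - 1) := by
  simp only [lapP, LinearMap.sum_apply, LinearMap.comp_apply]
  refine Submodule.sum_mem _ fun i _ => ?_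
  rw [MvPolynomial.mem_restrictTotalDegree]
  exact ((hp.pderiv (i := i)).pderiv (i := i)).totalDegree_le.trans (by omega)

theorem rtd_mono {d : ℕ} : Monotone (MvPolynomial.restrictTotalDegree (Fin d) ℝ) := by
  intro m n h p hp
  rw [MvPolynomial.mem_restrictTotalDegree] at *
  omega

theorem sum_hom {d : ℕ} {N : ℕ} {p : MvPolynomial (Fin d) ℝ}
    (hp : p ∈ MvPolynomial.restrictTotalDegree (Fin d) ℝ N) :
    p = ∑ k ∈ Finset.range (N + 1), MvPolynomial.homogeneousComponent k p := by
  rw [MvPolynomial.mem_restrictTotalDegree] at hp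
  conv_lhs => rw [← MvPolynomial.sum_homogeneousComponent p]
  apply Finset.sum_subset
  · intro i; simp; omega
  · intro i _ hi
    apply MvPolynomial.homogeneousComponent_eq_zero
    simp at hi; omega

theorem sphP_zero {d : ℕ} {p : MvPolynomial (Fin d) ℝ}
    (hp : p ∈ MvPolynomial.restrictTotalDegree (Fin d) ℝ 0) : sphP p = 0 := by
  rw [MvPolynomial.mem_restrictTotalDegree, Nat.le_zero,
    MvPolynomial.totalDegree_eq_zero_iff_eq_C] at hp
  rw [hp]
  simp [sphP, lapP, euP]

theorem sphP_mem_hom {d : ℕ} {k : ℕ} {p : MvPolynomial (Fin d) ℝ} (hp : p.IsHomogeneous k) :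
    sphP p ∈ MvPolynomial.restrictTotalDegree (Fin d) ℝ k := by
  rw [sphP_hom hp]
  refine sub_mem (rtd_mono (Nat.sub_le k 1) (lapP_deg hp)) (Submodule.smul_mem _ _ ?_)
  rw [MvPolynomial.mem_restrictTotalDegree]
  exact hp.totalDegree_le

theorem sphP_mem {d : ℕ} {N : ℕ} {p : MvPolynomial (Fin d) ℝ}
    (hp : p ∈ MvPolynomial.restrictTotalDegree (Fin d) ℝ N) :
    sphP p ∈ MvPolynomial.restrictTotalDegree (Fin d) ℝ N := by
  rw [sum_hom hp, map_sum]
  refine Submodule.sum_mem _ fun k hk => ?_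
  rw [Finset.mem_range] at hk
  exact rtd_mono (by omega) (sphP_mem_hom (MvPolynomial.homogeneousComponent_isHomogeneous k p))

theorem sphP_succ {d : ℕ} {N : ℕ} {p : MvPolynomial (Fin d) ℝ}
    (hp : p ∈ MvPolynomial.restrictTotalDegree (Fin d) ℝ (N + 1)) :
    sphP p + lamS d (N + 1) • p ∈ MvPolynomial.restrictTotalDegree (Fin d) ℝ N := by
  have e : sphP p + lamS d (N + 1) • p = ∑ k ∈ Finset.range (N + 1 + 1),
      (sphP (MvPolynomial.homogeneousComponent k p) +
        lamS d (N + 1) • MvPolynomial.homogeneousComponent k p) := by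
    rw [Finset.sum_add_distrib, ← Finset.smul_sum, ← map_sum, ← sum_hom hp]
  rw [e]
  refine Submodule.sum_mem _ fun k hk => ?_
  have hh := MvPolynomial.homogeneousComponent_isHomogeneous k p
  rw [Finset.mem_range] at hk
  by_cases hkN : k = N + 1
  · subst hkN
    rw [sphP_hom hh, sub_add_cancel]
    exact lapP_deg hh
  · refine add_mem (rtd_mono (by omega) (sphP_mem_hom hh)) (Submodule.smul_mem _ _ ?_)
    rw [MvPolynomial.mem_restrictTotalDegree]
    exact hh.totalDegree_le.trans (by omega)

theorem hom_ext {d : ℕ} {L1 L2 : MvPolynomial (Fin d) ℝ →ₗ[ℝ] ℝ}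
    (h : ∀ k p, p.IsHomogeneous k → L1 p = L2 p) (p : MvPolynomial (Fin d) ℝ) : L1 p = L2 p := by
  rw [← MvPolynomial.sum_homogeneousComponent p, map_sum, map_sum]
  exact Finset.sum_congr rfl fun k _ => h k _ (MvPolynomial.homogeneousComponent_isHomogeneous k p)

/-- polynomials as continuous functions on the sphere -/
def polC (d : ℕ) : MvPolynomial (Fin d) ℝ →ₐ[ℝ] C(Metric.sphere (0 : EuclideanSpace ℝ (Fin d)) 1, ℝ) :=
  MvPolynomial.aeval (fun i => ⟨fun θ => θ.val i,
    (EuclideanSpace.proj (𝕜 := ℝ) i).continuous.comp continuous_subtype_val⟩)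

theorem polC_apply {d : ℕ} (p : MvPolynomial (Fin d) ℝ)
    (θ : Metric.sphere (0 : EuclideanSpace ℝ (Fin d)) 1) : polC d p θ = evP p θ.val := by
  induction p using MvPolynomial.induction_on with
  | C a => simp [polC, evP]
  | add p q hp hq => simp [hp, hq]; simp [evP]
  | mul_X p i hp => rw [map_mul, ContinuousMap.mul_apply, hp]; simp [evP, polC]; exact Or.inl rfl

theorem polC_dense (d : ℕ) : (polC d).range.topologicalClosure = ⊤ := by
  apply ContinuousMap.subalgebra_topologicalClosure_eq_top_of_separatesPoints
  intro x y hxy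
  have : ∃ i, x.val i ≠ y.val i := by
    by_contra! h
    exact hxy (Subtype.ext (by ext i; exact h i))
  obtain ⟨i, hi⟩ := this
  refine ⟨_, ⟨polC d (MvPolynomial.X i), ⟨_, rfl⟩, rfl⟩, ?_⟩
  change polC d (MvPolynomial.X i) x ≠ polC d (MvPolynomial.X i) y
  rw [polC_apply, polC_apply]
  simpa [evP] using hi

/-- polynomials as elements of `L²` -/
def polL (d : ℕ) : MvPolynomial (Fin d) ℝ →ₗ[ℝ] Lp ℝ 2 (sphMeasure d) :=
  (ContinuousMap.toLp 2 (sphMeasure d) ℝ : C(Metric.sphere (0 : EuclideanSpace ℝ (Fin d)) 1, ℝ)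
    →L[ℝ] Lp ℝ 2 (sphMeasure d)).toLinearMap ∘ₗ (polC d).toLinearMap

theorem polL_dense (d : ℕ) : Dense (⋃ N, ((MvPolynomial.restrictTotalDegree (Fin d) ℝ N).map (polL d) :
    Set (Lp ℝ 2 (sphMeasure d)))) := by
  have h1 := (ContinuousMap.toLp_denseRange ℝ (sphMeasure d) ℝ (p := 2) (by simp))
  have h2 : Dense ((polC d).range : Set C(Metric.sphere (0 : EuclideanSpace ℝ (Fin d)) 1, ℝ)) := by
    intro x
    rw [← Subalgebra.topologicalClosure_coe, polC_dense]; trivial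
  have h3 := h1.dense_image (ContinuousLinearMap.continuous _) h2
  refine h3.mono ?_
  rintro _ ⟨_, ⟨p, rfl⟩, rfl⟩
  refine Set.mem_iUnion.2 ⟨p.totalDegree, p, ?_, rfl⟩
  rw [SetLike.mem_coe, MvPolynomial.mem_restrictTotalDegree]

theorem inner_toLp_real {d : ℕ} (f g : C(Metric.sphere (0 : EuclideanSpace ℝ (Fin d)) 1, ℝ)) :
    inner ℝ (ContinuousMap.toLp 2 (sphMeasure d) ℝ f) (ContinuousMap.toLp 2 (sphMeasure d) ℝ g) =
      ∫ θ, f θ * g θ ∂(sphMeasure d) := by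
  rw [ContinuousMap.inner_toLp]
  simp [mul_comm]

theorem cont_int {d : ℕ} (f : C(Metric.sphere (0 : EuclideanSpace ℝ (Fin d)) 1, ℝ)) :
    Integrable f (sphMeasure d) :=
  f.continuous.integrable_of_hasCompactSupport (HasCompactSupport.of_compactSpace _)

/-- Green's identity for a smooth homogeneous function against polynomials. -/
theorem green_pol {d : ℕ} (hd : 2 ≤ d) {l : ℕ} {F : EuclideanSpace ℝ (Fin d) → ℝ}
    (hF : ContDiffOn ℝ (⊤ : ℕ∞) F {(0 : EuclideanSpace ℝ (Fin d))}ᶜ) (hlF : HomOn l F)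
    (f g : C(Metric.sphere (0 : EuclideanSpace ℝ (Fin d)) 1, ℝ)) (hf : ∀ θ, f θ = F θ.val)
    (hg : ∀ θ, g θ = eucLap F θ.val - lamS d l * F θ.val) (q : MvPolynomial (Fin d) ℝ) :
    inner ℝ (ContinuousMap.toLp 2 (sphMeasure d) ℝ g) (polL d q) =
      inner ℝ (ContinuousMap.toLp 2 (sphMeasure d) ℝ f) (polL d (sphP q)) := by
  refine hom_ext (L1 := (innerSL ℝ (ContinuousMap.toLp 2 (sphMeasure d) ℝ g)).toLinearMap ∘ₗ polL d)
    (L2 := (innerSL ℝ (ContinuousMap.toLp 2 (sphMeasure d) ℝ f)).toLinearMap ∘ₗ polL d ∘ₗ sphP)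
    ?_ q
  intro k p hp
  change inner ℝ (ContinuousMap.toLp 2 (sphMeasure d) ℝ g)
      (ContinuousMap.toLp 2 (sphMeasure d) ℝ (polC d p)) =
    inner ℝ (ContinuousMap.toLp 2 (sphMeasure d) ℝ f)
      (ContinuousMap.toLp 2 (sphMeasure d) ℝ (polC d (sphP p)))
  have i1 : Integrable (fun θ => g θ * polC d p θ) (sphMeasure d) := cont_int (g * polC d p)
  have i2 : Integrable (fun θ => f θ * polC d (sphP p) θ) (sphMeasure d) :=
    cont_int (f * polC d (sphP p))
  rw [inner_toLp_real, inner_toLp_real, ← sub_eq_zero, ← integral_sub i1 i2]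
  rw [← green_sphere hd hF (evP_smooth p).contDiffOn hlF (evP_hom hp)]
  refine integral_congr_ae (Filter.Eventually.of_forall fun θ => ?_)
  have hθ : ‖θ.val‖ = 1 := mem_sphere_zero_iff_norm.1 θ.2
  have e : evP (sphP p) θ.val = evP (lapP p) θ.val - lamS d k * evP p θ.val := by
    rw [sphP_hom hp]; simp [evP]
  simp only [hf, hg, polC_apply, greenB, hθ, e, eucLap_evP, lamS]
  push_cast
  ring

theorem polL_sym {d : ℕ} (hd : 2 ≤ d) (p q : MvPolynomial (Fin d) ℝ) :
    inner ℝ (polL d (sphP p)) (polL d q) = inner ℝ (polL d p) (polL d (sphP q)) := by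
  have := hom_ext (L1 := (innerSL ℝ (polL d q)).toLinearMap ∘ₗ polL d ∘ₗ sphP)
    (L2 := (innerSL ℝ (polL d (sphP q))).toLinearMap ∘ₗ polL d) (p := p) ?_
  · rw [real_inner_comm, real_inner_comm (polL d (sphP q))]
    exact this
  · intro k p hp
    have := green_pol hd (evP_smooth p).contDiffOn (evP_hom hp) (polC d p) (polC d (sphP p))
      (fun θ => polC_apply p θ) (fun θ => by
        rw [polC_apply, sphP_hom hp, eucLap_evP]; simp [evP]) q
    change inner ℝ (polL d q) (polL d (sphP p)) = inner ℝ (polL d (sphP q)) (polL d p)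
    rw [real_inner_comm, real_inner_comm (polL d p)]
    exact this

theorem lam_ineq {d : ℕ} (hd : 2 ≤ d) (N : ℕ) :
    0 ≤ lamS d (N + 1) ^ 2 - (3 * (d:ℝ) - 1) * lamS d (N + 1) + 2 * ((d:ℝ) - 1) * d := by
  have hd' : (2:ℝ) ≤ d := by exact_mod_cast hd
  have e : lamS d (N + 1) ^ 2 - (3 * (d:ℝ) - 1) * lamS d (N + 1) + 2 * ((d:ℝ) - 1) * d
      = (lamS d (N+1) - (d - 1)) * (lamS d (N + 1) - 2 * d) := by ring
  rw [e]
  rcases N with _ | N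
  · have : lamS d (0 + 1) - ((d:ℝ) - 1) = 0 := by simp [lamS]; ring
    rw [this, zero_mul]
  · have hN : (0:ℝ) ≤ N := Nat.cast_nonneg N
    have : 2 * (d:ℝ) ≤ lamS d (N + 1 + 1) := by
      simp only [lamS]; push_cast; nlinarith
    apply mul_nonneg <;> linarith


theorem ext0_eq {d : ℕ} (F : Metric.sphere (0 : EuclideanSpace ℝ (Fin d)) 1 → ℝ)
    (H : EuclideanSpace ℝ (Fin d) → ℝ) (hH : ∀ θ, F θ = H θ.val)
    {x : EuclideanSpace ℝ (Fin d)} (hx : x ≠ 0) : ext0 F x = H (‖x‖⁻¹ • x) := by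
  simp [ext0, hx, hH]

theorem ext0_hom {d : ℕ} (F : Metric.sphere (0 : EuclideanSpace ℝ (Fin d)) 1 → ℝ)
    (H : EuclideanSpace ℝ (Fin d) → ℝ) (hH : ∀ θ, F θ = H θ.val) : HomOn 0 (ext0 F) := by
  intro x hx r hr
  rw [ext0_eq F H hH hx, ext0_eq F H hH (smul_ne_zero hr.ne' hx), norm_smul,
    Real.norm_of_nonneg hr.le, smul_smul, mul_inv, mul_assoc, mul_comm _ r, ← mul_assoc,
    inv_mul_cancel₀ hr.ne']
  simp

theorem ext0_smooth {d : ℕ} (F : Metric.sphere (0 : EuclideanSpace ℝ (Fin d)) 1 → ℝ)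
    (H : EuclideanSpace ℝ (Fin d) → ℝ) (hH : ∀ θ, F θ = H θ.val)
    (hs : ContDiffOn ℝ (⊤ : ℕ∞) H {(0 : EuclideanSpace ℝ (Fin d))}ᶜ) :
    ContDiffOn ℝ (⊤ : ℕ∞) (ext0 F) {(0 : EuclideanSpace ℝ (Fin d))}ᶜ := by
  have h1 : ContDiffOn ℝ (⊤ : ℕ∞) (fun x : EuclideanSpace ℝ (Fin d) => ‖x‖⁻¹ • x)
      {(0 : EuclideanSpace ℝ (Fin d))}ᶜ := by
    intro x hx
    exact (((contDiffAt_norm ℝ hx).inv (norm_ne_zero_iff.2 hx)).smul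
      contDiffAt_id).contDiffWithinAt
  refine (hs.comp h1 ?_).congr fun x hx => ext0_eq F H hH hx
  intro x hx
  exact smul_ne_zero (inv_ne_zero (norm_ne_zero_iff.2 hx)) hx

theorem sphere_cont {d : ℕ} {H : EuclideanSpace ℝ (Fin d) → ℝ}
    (hs : ContDiffOn ℝ (⊤ : ℕ∞) H {(0 : EuclideanSpace ℝ (Fin d))}ᶜ) :
    Continuous (fun θ : Metric.sphere (0 : EuclideanSpace ℝ (Fin d)) 1 => H θ.val) := by
  refine hs.continuousOn.comp_continuous continuous_subtype_val fun θ => ?_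
  exact norm_ne_zero_iff.1 (by rw [mem_sphere_zero_iff_norm.1 θ.2]; exact one_ne_zero)

theorem final_arith (d s A B C I : ℝ) (hd : 2 ≤ d) (hs : 0 ≤ s)
    (h : 2 * (d - 1) * d * I ^ 2 ≤ (C + (3 * d - 1) * B + 2 * (d - 1) * d * A) * s)
    (hA : 0 ≤ C + (3 * d - 1) * B + 2 * (d - 1) * d * A) :
    1 / s * I ^ 2 - (1 / (d - 1)) * ((d - 1) * A + B) ≤
      ((d - 1) / (d + 1)) * ((A + 2 * B / (d - 1) + C / (d - 1) ^ 2) - 1 / s * I ^ 2) := by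
  have h1 : 0 < d - 1 := by linarith
  have h2 : 0 < d + 1 := by linarith
  have key : 2 * (d - 1) * d * (1 / s * I ^ 2) ≤ C + (3 * d - 1) * B + 2 * (d - 1) * d * A := by
    rcases hs.eq_or_lt with h0 | h0
    · rw [← h0]; simpa using hA
    · rw [show 2 * (d - 1) * d * (1 / s * I ^ 2) = (2 * (d - 1) * d * I ^ 2) / s by ring,
        div_le_iff₀ h0]
      exact h
  rw [← sub_nonneg]
  have e : ((d - 1) / (d + 1)) * ((A + 2 * B / (d - 1) + C / (d - 1) ^ 2) - 1 / s * I ^ 2) -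
      (1 / s * I ^ 2 - (1 / (d - 1)) * ((d - 1) * A + B)) =
      (C + (3 * d - 1) * B + 2 * (d - 1) * d * A - 2 * (d - 1) * d * (1 / s * I ^ 2)) /
        ((d - 1) * (d + 1)) := by
    generalize 1 / s * I ^ 2 = J
    field_simp
    ring
  rw [e]
  exact div_nonneg (by linarith) (by positivity)


/-- stability/reverse form of the Minkowski inequality. If `Σ = ∂K` is a
closed convex hypersurface in `ℝ^d` bounding a smooth convex body `K`, then
`(1/|𝕊^{d-1}|)(∫_Σ H_{d-2})² − ∫_Σ H_{d-3} ≤ ((d-1)/(d+1)) [∫_Σ H_{d-2}²/H_{d-1} −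
(1/|𝕊^{d-1}|)(∫_Σ H_{d-2})²]`. -/
theorem minkowski_deficit_upper_bound (d : ℕ) (hd : 2 ≤ d)
    (K : ConvexBody (EuclideanSpace ℝ (Fin d))) (hK : SmoothBody K) :
    (1 / sphArea d) * (intH2 K) ^ 2 - intH3 K ≤
      (((d : ℝ) - 1) / ((d : ℝ) + 1)) *
        (intH2sq K - (1 / sphArea d) * (intH2 K) ^ 2) := by
  have hFs := ext0_smooth (suppS K) (suppFn K) (fun _ => rfl) hK.2
  have hF0 : HomOn ((0 : ℕ) : ℤ) (ext0 (suppS K)) := by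
    simpa using ext0_hom (suppS K) (suppFn K) (fun _ => rfl)
  have hd' : (2 : ℝ) ≤ d := by exact_mod_cast hd
  have hd1 : (d : ℝ) - 1 ≠ 0 := by linarith
  let f : C(Metric.sphere (0 : EuclideanSpace ℝ (Fin d)) 1, ℝ) := ⟨suppS K, sphere_cont hK.2⟩
  let g : C(Metric.sphere (0 : EuclideanSpace ℝ (Fin d)) 1, ℝ) :=
    ⟨sphLap (suppS K), sphere_cont (eucLap_smooth hFs)⟩
  have hf : ∀ θ, f θ = ext0 (suppS K) θ.val := by
    intro θ
    have hθ : ‖θ.val‖ = 1 := mem_sphere_zero_iff_norm.1 θ.2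
    have hθ0 : θ.val ≠ 0 := norm_ne_zero_iff.1 (by rw [hθ]; exact one_ne_zero)
    rw [ext0_eq (suppS K) (suppFn K) (fun _ => rfl) hθ0, hθ, inv_one, one_smul]
    rfl
  have hg : ∀ θ, g θ = eucLap (ext0 (suppS K)) θ.val - lamS d 0 * ext0 (suppS K) θ.val := by
    intro θ
    have : lamS d 0 = 0 := by simp [lamS]
    rw [this, zero_mul, sub_zero]
    rfl
  have : ∀ N, FiniteDimensional ℝ
      ((MvPolynomial.restrictTotalDegree (Fin d) ℝ N).map (polL d)) := fun N => inferInstance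
  have key := hilbert_aux (polL d) sphP (MvPolynomial.restrictTotalDegree (Fin d) ℝ) rtd_mono
    (polL_dense d) (lamS d) (ContinuousMap.toLp 2 (sphMeasure d) ℝ f)
    (ContinuousMap.toLp 2 (sphMeasure d) ℝ g) (fun p hp => sphP_zero hp)
    (fun N p hp => sphP_mem hp) (fun N p hp => sphP_succ hp) (fun p q => polL_sym hd p q)
    (fun q => green_pol hd hFs hF0 f g hf hg q) (3 * (d : ℝ) - 1) (2 * ((d : ℝ) - 1) * d)
    (lam_ineq hd) 1 (by rw [MvPolynomial.mem_restrictTotalDegree]; simp) (by nlinarith)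
  have e1 : polL d 1 = ContinuousMap.toLp 2 (sphMeasure d) ℝ 1 := by
    change ContinuousMap.toLp 2 (sphMeasure d) ℝ (polC d 1) = _
    rw [map_one]
  rw [e1, inner_toLp_real, inner_toLp_real, inner_toLp_real, inner_toLp_real,
    inner_toLp_real] at key
  have eI : ∫ θ, f θ * (1 : C(Metric.sphere (0 : EuclideanSpace ℝ (Fin d)) 1, ℝ)) θ
      ∂(sphMeasure d) = intH2 K := by
    simp [intH2]; rfl
  have eS : ∫ θ, (1 : C(Metric.sphere (0 : EuclideanSpace ℝ (Fin d)) 1, ℝ)) θ *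
      (1 : C(Metric.sphere (0 : EuclideanSpace ℝ (Fin d)) 1, ℝ)) θ
      ∂(sphMeasure d) = sphArea d := by
    simp [sphArea, Measure.real]
  rw [eI, eS] at key
  have iA : Integrable (fun θ => f θ * f θ) (sphMeasure d) := cont_int (f * f)
  have iB : Integrable (fun θ => f θ * g θ) (sphMeasure d) := cont_int (f * g)
  have iC : Integrable (fun θ => g θ * g θ) (sphMeasure d) := cont_int (g * g)
  have e3 : intH3 K = (1 / ((d : ℝ) - 1)) * (((d : ℝ) - 1) * (∫ θ, f θ * f θ ∂(sphMeasure d)) +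
      ∫ θ, f θ * g θ ∂(sphMeasure d)) := by
    rw [← integral_const_mul, ← integral_add (iA.const_mul _) iB, intH3]
    congr 1
    refine integral_congr_ae (Filter.Eventually.of_forall fun θ => ?_)
    change _ = ((d : ℝ) - 1) * (suppS K θ * suppS K θ) + suppS K θ * sphLap (suppS K) θ
    ring
  have e4 : intH2sq K = (∫ θ, f θ * f θ ∂(sphMeasure d)) +
      2 * (∫ θ, f θ * g θ ∂(sphMeasure d)) / ((d : ℝ) - 1) +
      (∫ θ, g θ * g θ ∂(sphMeasure d)) / ((d : ℝ) - 1) ^ 2 := by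
    have iAB : Integrable (fun θ => f θ * f θ + 2 * (f θ * g θ) / ((d : ℝ) - 1))
      (sphMeasure d) := iA.add ((iB.const_mul _).div_const _)
    rw [← integral_const_mul, ← integral_div, ← integral_div,
      ← integral_add iA ((iB.const_mul _).div_const _),
      ← integral_add iAB (iC.div_const _), intH2sq]
    refine integral_congr_ae (Filter.Eventually.of_forall fun θ => ?_)
    change _ = suppS K θ * suppS K θ + 2 * (suppS K θ * sphLap (suppS K) θ) / ((d : ℝ) - 1) +
      sphLap (suppS K) θ * sphLap (suppS K) θ / ((d : ℝ) - 1) ^ 2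
    field_simp
    ring
  have hs0 : 0 ≤ sphArea d := ENNReal.toReal_nonneg
  rw [e3, e4]
  refine final_arith d (sphArea d) _ _ _ (intH2 K) hd' hs0 key ?_
  rcases hs0.eq_or_lt with h0 | h0
  · have hm : sphMeasure d = 0 := by
      rw [← Measure.measure_univ_eq_zero]
      rcases (ENNReal.toReal_eq_zero_iff _).1 h0.symm with h | h
      · exact h
      · exact absurd h (measure_ne_top _ _)
    simp [hm]
  · have h2 : 0 ≤ 2 * ((d : ℝ) - 1) * d * intH2 K ^ 2 := by
      have : 0 ≤ 2 * ((d : ℝ) - 1) * d := by nlinarith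
      positivity
    exact nonneg_of_mul_nonneg_left (h2.trans key) h0
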